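/- There is a universal constant C > 0 such that the following holds. Let P be a probability measure on ℝ^d, σ > 0, and let p_σ be the density of the Gaussian perturbation of P with variance σ². Then for every integer p ≥ 1, E_{X∼p_σ}‖∇log p_σ(X)‖^p ≤ (C·p·d/σ²)^{p/2}; equivalently, the sub-Gaussian (ψ₂-Orlicz) norm of the random variable ‖∇log p_σ(X)‖ is at most C·√(d/σ²). -/

import Mathlib

open MeasureTheory Real

noncomputable section

namespace DiffusionKL

/-- Euclidean space `ℝ^d`. -/
abbrev Vec (d : ℕ) := EuclideanSpace ℝ (Fin d)

/-- Density of the isotropic Gaussian `N(m, v·I_d)` on `ℝ^d`. -/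
def gaussDensity (d : ℕ) (m : Vec d) (v : ℝ) (x : Vec d) : ℝ :=
  (2 * π * v) ^ (-(d : ℝ) / 2) * Real.exp (-‖x - m‖ ^ 2 / (2 * v))

/-- The isotropic Gaussian measure `N(m, v·I_d)` on `ℝ^d`. -/
def gaussMeasure (d : ℕ) (m : Vec d) (v : ℝ) : Measure (Vec d) :=
  MeasureTheory.volume.withDensity (fun x => ENNReal.ofReal (gaussDensity d m v x))

/-- The standard Gaussian measure `γ_d = N(0, I_d)` on `ℝ^d`. -/
def stdGauss (d : ℕ) : Measure (Vec d) := gaussMeasure d 0 1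

/-- Kullback-Leibler divergence `KL(μ ‖ ν) = ∫ log (dμ/dν) dμ`. -/
def KLdiv {d : ℕ} (μ ν : Measure (Vec d)) : ℝ :=
  ∫ x, Real.log ((μ.rnDeriv ν x).toReal) ∂μ

/-- `G_{t,s} = ∫_t^s g(u)² du`. -/
def Gvar (g : ℝ → ℝ) (t s : ℝ) : ℝ := ∫ u in t..s, (g u) ^ 2

/-- `α_{t,s} = exp(−G_{t,s}/2)`. -/
def alphaF (g : ℝ → ℝ) (t s : ℝ) : ℝ := Real.exp (-(Gvar g t s) / 2)

/-- `σ_t² = 1 − exp(−G_t)`. -/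
def sigmaSq (g : ℝ → ℝ) (t : ℝ) : ℝ := 1 - Real.exp (-(Gvar g 0 t))

/-- The law of the forward marginal `x_t = α_t X₀ + σ_t Z`, `X₀ ∼ P`, `Z ∼ N(0,I_d)` indep. -/
def forwardLaw (d : ℕ) (P : Measure (Vec d)) (g : ℝ → ℝ) (t : ℝ) : Measure (Vec d) :=
  Measure.map (fun q : Vec d × Vec d => alphaF g 0 t • q.1 + Real.sqrt (sigmaSq g t) • q.2)
    (P.prod (stdGauss d))

/-- Explicit density of the forward marginal `p_t` (for `t > 0`). -/
def forwardDensity (d : ℕ) (P : Measure (Vec d)) (g : ℝ → ℝ) (t : ℝ) (x : Vec d) : ℝ :=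
  (2 * π * sigmaSq g t) ^ (-(d : ℝ) / 2) *
    ∫ y, Real.exp (-‖x - alphaF g 0 t • y‖ ^ 2 / (2 * sigmaSq g t)) ∂P

/-- Score function `∇ log p` of a density `p`. -/
def scoreOf {d : ℕ} (p : Vec d → ℝ) (x : Vec d) : Vec d :=
  gradient (fun z => Real.log (p z)) x

/-- Score `∇ log p_t` of the forward marginal at time `t > 0`. -/
def fwdScore (d : ℕ) (P : Measure (Vec d)) (g : ℝ → ℝ) (t : ℝ) : Vec d → Vec d :=
  scoreOf (forwardDensity d P g t)

/-- Underlying measure for the joint forward coupling: `ω = (X₀, Z, Z')`. -/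
def coupleMeasure (d : ℕ) (P : Measure (Vec d)) : Measure (Vec d × Vec d × Vec d) :=
  P.prod ((stdGauss d).prod (stdGauss d))

/-- The forward process at time `t`: `x_t(ω) = α_t X₀ + σ_t Z`. -/
def xt (d : ℕ) (g : ℝ → ℝ) (t : ℝ) (ω : Vec d × Vec d × Vec d) : Vec d :=
  alphaF g 0 t • ω.1 + Real.sqrt (sigmaSq g t) • ω.2.1

/-- The forward process at time `s ≥ t`, coupled with `x_t` by
`x_s = α_{t,s} x_t + √(1−α_{t,s}²) Z'`. -/
def xts (d : ℕ) (g : ℝ → ℝ) (t s : ℝ) (ω : Vec d × Vec d × Vec d) : Vec d :=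
  alphaF g t s • xt d g t ω + Real.sqrt (1 - (alphaF g t s) ^ 2) • ω.2.2

/-- Law of a Markov chain after `n` steps, started at `init`, with transition kernels `κ`. -/
def chainLaw (d : ℕ) (init : Measure (Vec d)) (κ : ℕ → Vec d → Measure (Vec d)) :
    ℕ → Measure (Vec d)
  | 0 => init
  | k + 1 => (chainLaw d init κ k).bind (κ k)

/-- One step of the exponential-integrator sampler:
`ŷ_{k+1} | ŷ_k = a ∼ N(e^{G_{N−k}/2}·a + 2(e^{G_{N−k}/2} − 1)·s(a,t_{N−k}), (e^{G_{N−k}} − 1)·I_d)`. -/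
def EIstep (d N : ℕ) (tp : ℕ → ℝ) (g : ℝ → ℝ) (sc : Vec d → ℝ → Vec d) (k : ℕ) (a : Vec d) :
    Measure (Vec d) :=
  gaussMeasure d
    (Real.exp (Gvar g (tp (N - k - 1)) (tp (N - k)) / 2) • a +
      (2 * (Real.exp (Gvar g (tp (N - k - 1)) (tp (N - k)) / 2) - 1)) • sc a (tp (N - k)))
    (Real.exp (Gvar g (tp (N - k - 1)) (tp (N - k))) - 1)

/-- One step of the Euler–Maruyama sampler:
`ŷ_{k+1} | ŷ_k = a ∼ N((1 + G_{N−k}/2)·a + G_{N−k}·s(a,t_{N−k}), G_{N−k}·I_d)`. -/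
def EMstep (d N : ℕ) (tp : ℕ → ℝ) (g : ℝ → ℝ) (sc : Vec d → ℝ → Vec d) (k : ℕ) (a : Vec d) :
    Measure (Vec d) :=
  gaussMeasure d
    ((1 + Gvar g (tp (N - k - 1)) (tp (N - k)) / 2) • a +
      (Gvar g (tp (N - k - 1)) (tp (N - k))) • sc a (tp (N - k)))
    (Gvar g (tp (N - k - 1)) (tp (N - k)))

/-- Terminal law of the exponential-integrator sampler started at `N(0,I_d)`. -/
def EIlaw (d N : ℕ) (tp : ℕ → ℝ) (g : ℝ → ℝ) (sc : Vec d → ℝ → Vec d) : Measure (Vec d) :=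
  chainLaw d (stdGauss d) (EIstep d N tp g sc) N

/-- Terminal law of the Euler–Maruyama sampler started at `N(0,I_d)`. -/
def EMlaw (d N : ℕ) (tp : ℕ → ℝ) (g : ℝ → ℝ) (sc : Vec d → ℝ → Vec d) : Measure (Vec d) :=
  chainLaw d (stdGauss d) (EMstep d N tp g sc) N

/-- The weighted L² score estimation error
`(1/G_T)·Σ_{k=1}^N G_k·E_{p_{t_k}} ‖∇log p_{t_k}(x) − s(x,t_k)‖²`. -/
def scoreErr (d N : ℕ) (P : Measure (Vec d)) (g : ℝ → ℝ) (tp : ℕ → ℝ)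
    (sc : Vec d → ℝ → Vec d) : ℝ :=
  (1 / Gvar g 0 (tp N)) * ∑ k ∈ Finset.range N,
    Gvar g (tp k) (tp (k + 1)) *
      ∫ x, ‖fwdScore d P g (tp (k + 1)) x - sc x (tp (k + 1))‖ ^ 2
        ∂(forwardLaw d P g (tp (k + 1)))

/-- Entry `(i,j)` of the Hessian matrix `∇²f(x)`. -/
def hessEntry {d : ℕ} (f : Vec d → ℝ) (x : Vec d) (i j : Fin d) : ℝ :=
  fderiv ℝ (fun y => fderiv ℝ f y (EuclideanSpace.single j 1)) x (EuclideanSpace.single i 1)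

/-- Frobenius norm of the Hessian matrix `∇²f(x)`. -/
def hessFrob {d : ℕ} (f : Vec d → ℝ) (x : Vec d) : ℝ :=
  Real.sqrt (∑ i, ∑ j, (hessEntry f x i j) ^ 2)

/-- Density of the Gaussian perturbation `X + σZ`, `X ∼ P`, `Z ∼ N(0,I_d)`. -/
def perturbDensity (d : ℕ) (P : Measure (Vec d)) (σ : ℝ) (x : Vec d) : ℝ :=
  (2 * π * σ ^ 2) ^ (-(d : ℝ) / 2) * ∫ y, Real.exp (-‖x - y‖ ^ 2 / (2 * σ ^ 2)) ∂P

/-- Density of `μY + σZ`, `Y ∼ P`, `Z ∼ N(0,I_d)`. -/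
def perturbDensity' (d : ℕ) (P : Measure (Vec d)) (μ σ : ℝ) (x : Vec d) : ℝ :=
  (2 * π * σ ^ 2) ^ (-(d : ℝ) / 2) * ∫ y, Real.exp (-‖x - μ • y‖ ^ 2 / (2 * σ ^ 2)) ∂P

/-- Law of the Gaussian perturbation `X + σZ`. -/
def perturbLaw (d : ℕ) (P : Measure (Vec d)) (σ : ℝ) : Measure (Vec d) :=
  Measure.map (fun q : Vec d × Vec d => q.1 + σ • q.2)
    (P.prod (MeasureTheory.volume.withDensity
      (fun x : Vec d => ENNReal.ofReal ((2 * π) ^ (-(d : ℝ) / 2) * Real.exp (-‖x‖ ^ 2 / 2)))))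

/-- The tilted conditional measure `dP̃_{μ,σ}(y|x) ∝ exp(−‖x−μy‖²/(2σ²)) dP(y)`. -/
def tiltMeasure (d : ℕ) (P : Measure (Vec d)) (μ σ : ℝ) (x : Vec d) : Measure (Vec d) :=
  ((P.withDensity (fun y => ENNReal.ofReal (Real.exp (-‖x - μ • y‖ ^ 2 / (2 * σ ^ 2))))) Set.univ)⁻¹ •
    P.withDensity (fun y => ENNReal.ofReal (Real.exp (-‖x - μ • y‖ ^ 2 / (2 * σ ^ 2))))

/-- Sub-exponential (ψ₁-Orlicz) norm of `f` under the measure `μ`. -/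
def psi1Norm {α : Type*} [MeasurableSpace α] (μ : Measure α) (f : α → ℝ) : ℝ :=
  sInf {t : ℝ | 0 < t ∧ ∫ x, Real.exp (|f x| / t) ∂μ ≤ 2}

/-- Sub-Gaussian (ψ₂-Orlicz) norm of `f` under the measure `μ`. -/
def psi2Norm {α : Type*} [MeasurableSpace α] (μ : Measure α) (f : α → ℝ) : ℝ :=
  sInf {t : ℝ | 0 < t ∧ ∫ x, Real.exp ((f x) ^ 2 / t ^ 2) ∂μ ≤ 2}

/-!
By Tweedie's formula the score of `Y + σZ` at `x` is the posterior mean of `(Y - x) / σ²`. Hence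
Jensen's inequality bounds `exp (a * ‖score‖²)` by the posterior mean of `exp (a * ‖Y - x‖² / σ⁴)`,
and averaging over `x` undoes the conditioning: what remains is the Gaussian integral
`𝔼 exp (a * ‖σZ‖² / σ⁴) = (1 - 2a / σ²) ^ (-d / 2)`. By Bernoulli's inequality this is at most `2`
for `a = σ² / (4d)`, that is, the `ψ₂`-norm is at most `t = 2√(d / σ²)`. The moment bounds follow
from `|u| ^ p ≤ (p t² / 2) ^ (p / 2) * exp (u² / t²)`, and `C = 8` serves both claims because
`2 p t² = 8 p d / σ²`.
-/

section Orlicz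

variable {α : Type*} [MeasurableSpace α] {μ : Measure α} {f : α → ℝ}

lemma integral_le_of_lintegral_ofReal_le {B : ℝ} (hf : ∀ x, 0 ≤ f x) (hB : 0 ≤ B)
    (h : ∫⁻ x, ENNReal.ofReal (f x) ∂μ ≤ ENNReal.ofReal B) : ∫ x, f x ∂μ ≤ B := by
  have hnorm := norm_integral_le_lintegral_norm (μ := μ) f
  simp only [Real.norm_of_nonneg (hf _)] at hnorm
  exact (Real.le_norm_self _).trans (hnorm.trans (ENNReal.toReal_le_of_le_ofReal hB h))

lemma abs_rpow_le_mul_exp_sq_div_sq {p t : ℝ} (hp : 0 < p) (ht : t ≠ 0) (u : ℝ) :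
    |u| ^ p ≤ (p * t ^ 2 / 2) ^ (p / 2) * Real.exp (u ^ 2 / t ^ 2) := by
  set w := u ^ 2 / t ^ 2 / (p / 2) with hw
  have hw_le : w ≤ Real.exp w := by linarith [Real.add_one_le_exp w]
  calc |u| ^ p = (u ^ 2) ^ (p / 2) := by
        rw [← sq_abs, ← Real.rpow_natCast_mul (abs_nonneg u)]
        congr 1
        push_cast
        ring
    _ = (p * t ^ 2 / 2) ^ (p / 2) * w ^ (p / 2) := by
        rw [← Real.mul_rpow (by positivity) (by positivity), hw]
        congr 1
        field_simp
    _ ≤ (p * t ^ 2 / 2) ^ (p / 2) * Real.exp w ^ (p / 2) := by gcongr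
    _ = (p * t ^ 2 / 2) ^ (p / 2) * Real.exp (u ^ 2 / t ^ 2) := by
        rw [← Real.exp_mul, hw, div_mul_cancel₀ _ (by positivity)]

lemma integral_abs_rpow_le_of_lintegral_exp_le_two {p t : ℝ} (hp : 1 ≤ p) (ht : t ≠ 0)
    (h : ∫⁻ x, ENNReal.ofReal (Real.exp (f x ^ 2 / t ^ 2)) ∂μ ≤ 2) :
    ∫ x, |f x| ^ p ∂μ ≤ (2 * p * t ^ 2) ^ (p / 2) := by
  set K := (p * t ^ 2 / 2) ^ (p / 2)
  have hK : 0 ≤ K := by positivity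
  have hmoment : ∫ x, |f x| ^ p ∂μ ≤ K * 2 := by
    refine integral_le_of_lintegral_ofReal_le (fun x ↦ by positivity) (by positivity) ?_
    calc ∫⁻ x, ENNReal.ofReal (|f x| ^ p) ∂μ
        ≤ ∫⁻ x, ENNReal.ofReal K * ENNReal.ofReal (Real.exp (f x ^ 2 / t ^ 2)) ∂μ := by
          gcongr with x
          rw [← ENNReal.ofReal_mul hK]
          exact ENNReal.ofReal_le_ofReal (abs_rpow_le_mul_exp_sq_div_sq (by linarith) ht _)
      _ ≤ ENNReal.ofReal K * 2 := by
          rw [lintegral_const_mul' _ _ ENNReal.ofReal_ne_top]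
          gcongr
      _ = ENNReal.ofReal (K * 2) := by rw [ENNReal.ofReal_mul hK, ENNReal.ofReal_ofNat]
  have htwo : (2 : ℝ) ≤ 4 ^ (p / 2) := by
    calc (2 : ℝ) ≤ 2 ^ p := Real.self_le_rpow_of_one_le one_le_two hp
      _ = 4 ^ (p / 2) := by
        rw [show (4 : ℝ) = 2 ^ (2 : ℝ) by norm_num, ← Real.rpow_mul zero_le_two]
        congr 1
        ring
  calc ∫ x, |f x| ^ p ∂μ ≤ K * 4 ^ (p / 2) := hmoment.trans (by gcongr)
    _ = (2 * p * t ^ 2) ^ (p / 2) := by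
      rw [← Real.mul_rpow (by positivity) (by norm_num)]
      congr 1
      ring

lemma psi2Norm_le_of_lintegral_exp_le_two {t : ℝ} (ht : 0 < t)
    (h : ∫⁻ x, ENNReal.ofReal (Real.exp (f x ^ 2 / t ^ 2)) ∂μ ≤ 2) : psi2Norm μ f ≤ t := by
  refine csInf_le ⟨0, fun s hs ↦ hs.1.le⟩ ⟨ht, ?_⟩
  refine integral_le_of_lintegral_ofReal_le (fun x ↦ (Real.exp_pos _).le) zero_le_two ?_
  rwa [ENNReal.ofReal_ofNat]

lemma psi2Norm_zero [IsProbabilityMeasure μ] : psi2Norm μ (fun _ ↦ 0) = 0 := by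
  have hset : {t : ℝ | 0 < t ∧ ∫ _, Real.exp ((0 : ℝ) ^ 2 / t ^ 2) ∂μ ≤ 2} = Set.Ioi 0 := by
    ext t
    simp
  rw [psi2Norm, hset, csInf_Ioi]

end Orlicz

section Tilted

variable {α β : Type*} [MeasurableSpace α] [MeasurableSpace β] {μ : Measure α} {P : Measure β}

lemma lintegral_exp_mul_lintegral_tilted {f : β → ℝ}
    (hf : Integrable (fun y ↦ Real.exp (f y)) P) (V : β → ENNReal) :
    (∫⁻ y, ENNReal.ofReal (Real.exp (f y)) ∂P) * ∫⁻ y, V y ∂P.tilted f =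
      ∫⁻ y, ENNReal.ofReal (Real.exp (f y)) * V y ∂P := by
  rcases eq_zero_or_neZero P with rfl | hP
  · simp
  have hZ : 0 < ∫ y, Real.exp (f y) ∂P := integral_exp_pos hf
  rw [← ofReal_integral_eq_lintegral_ofReal hf (.of_forall fun y ↦ (Real.exp_pos _).le),
    lintegral_tilted, ← lintegral_const_mul' _ _ ENNReal.ofReal_ne_top]
  refine lintegral_congr fun y ↦ ?_
  rw [← mul_assoc, ← ENNReal.ofReal_mul hZ.le, mul_div_cancel₀ _ hZ.ne']

lemma measurable_lintegral_tilted [SFinite P] {f : α → β → ℝ} {V : α → β → ENNReal}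
    (hf : Measurable (Function.uncurry f)) (hV : Measurable (Function.uncurry V)) :
    Measurable fun x ↦ ∫⁻ y, V x y ∂P.tilted (f x) := by
  have hZ : Measurable fun x ↦ ∫ y, Real.exp (f x y) ∂P :=
    (hf.exp.stronglyMeasurable.integral_prod_right (ν := P)
      (f := fun x y ↦ Real.exp (f x y))).measurable
  simp only [lintegral_tilted]
  exact ((hf.exp.div (hZ.comp measurable_fst)).ennreal_ofReal.mul hV).lintegral_prod_right'

/- Bayes' formula: `P.tilted (f x)` is the conditional law of `y` given `x` when the pair `(x, y)`
has density `exp (f x y)` with respect to `μ.prod P`. -/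
lemma lintegral_lintegral_exp_mul_lintegral_tilted [SFinite μ] [SFinite P] {f : α → β → ℝ}
    {V : α → β → ENNReal} (hf : Measurable (Function.uncurry f))
    (hint : ∀ x, Integrable (fun y ↦ Real.exp (f x y)) P) (hV : Measurable (Function.uncurry V)) :
    ∫⁻ y, ∫⁻ x, ENNReal.ofReal (Real.exp (f x y)) * ∫⁻ z, V x z ∂P.tilted (f x) ∂μ ∂P =
      ∫⁻ y, ∫⁻ x, ENNReal.ofReal (Real.exp (f x y)) * V x y ∂μ ∂P := by
  have hw : Measurable (Function.uncurry fun x y ↦ ENNReal.ofReal (Real.exp (f x y))) :=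
    hf.exp.ennreal_ofReal
  have hm : Measurable fun x ↦ ∫⁻ z, V x z ∂P.tilted (f x) := measurable_lintegral_tilted hf hV
  rw [← lintegral_lintegral_swap (μ := μ) (hw.mul (hm.comp measurable_fst)).aemeasurable,
    ← lintegral_lintegral_swap (μ := μ) (hw.mul hV).aemeasurable]
  refine lintegral_congr fun x ↦ ?_
  rw [lintegral_mul_const _ hw.of_uncurry_left, lintegral_exp_mul_lintegral_tilted (hint x)]

end Tilted

section Jensen

variable {E : Type*} [NormedAddCommGroup E] [NormedSpace ℝ E]

lemma convexOn_exp_mul_sq_norm {κ : ℝ} (hκ : 0 ≤ κ) :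
    ConvexOn ℝ Set.univ fun z : E ↦ Real.exp (κ * ‖z‖ ^ 2) := by
  have hsq : ConvexOn ℝ Set.univ fun z : E ↦ κ * ‖z‖ ^ 2 :=
    (convexOn_univ_norm.pow (fun z _ ↦ norm_nonneg z) 2).smul hκ
  refine ⟨convex_univ, fun x hx y hy a b ha hb hab ↦ ?_⟩
  exact (Real.exp_le_exp.2 (hsq.2 hx hy ha hb hab)).trans
    (convexOn_exp.2 (Set.mem_univ _) (Set.mem_univ _) ha hb hab)

lemma ofReal_exp_mul_sq_norm_integral_le [CompleteSpace E] {α : Type*} [MeasurableSpace α]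
    {μ : Measure α} [IsProbabilityMeasure μ] {κ : ℝ} (hκ : 0 ≤ κ) (X : α → E) :
    ENNReal.ofReal (Real.exp (κ * ‖∫ ω, X ω ∂μ‖ ^ 2)) ≤
      ∫⁻ ω, ENNReal.ofReal (Real.exp (κ * ‖X ω‖ ^ 2)) ∂μ := by
  by_cases hX : Integrable X μ
  · have hcont : Continuous fun z : E ↦ Real.exp (κ * ‖z‖ ^ 2) := by fun_prop
    have hpos : 0 ≤ᵐ[μ] fun ω ↦ Real.exp (κ * ‖X ω‖ ^ 2) := .of_forall fun ω ↦ (Real.exp_pos _).le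
    by_cases hexp : ∫⁻ ω, ENNReal.ofReal (Real.exp (κ * ‖X ω‖ ^ 2)) ∂μ = ⊤
    · exact hexp ▸ le_top
    have hint : Integrable (fun ω ↦ Real.exp (κ * ‖X ω‖ ^ 2)) μ :=
      (lintegral_ofReal_ne_top_iff_integrable (hcont.comp_aestronglyMeasurable hX.1) hpos).1 hexp
    rw [← ofReal_integral_eq_lintegral_ofReal hint hpos]
    exact ENNReal.ofReal_le_ofReal ((convexOn_exp_mul_sq_norm hκ).map_integral_le
      hcont.continuousOn isClosed_univ (.of_forall fun _ ↦ Set.mem_univ _) hX hint)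
  · calc ENNReal.ofReal (Real.exp (κ * ‖∫ ω, X ω ∂μ‖ ^ 2)) = ∫⁻ _, 1 ∂μ := by
          simp [integral_undef hX]
      _ ≤ ∫⁻ ω, ENNReal.ofReal (Real.exp (κ * ‖X ω‖ ^ 2)) ∂μ := by
          gcongr with ω
          exact ENNReal.one_le_ofReal.2 (Real.one_le_exp (by positivity))

end Jensen

section Score

variable {E : Type*} [NormedAddCommGroup E]

lemma exp_neg_sq_div_mul_le {v : ℝ} (hv : 0 < v) (r : ℝ) :
    Real.exp (-r ^ 2 / (2 * v)) * r ≤ 1 + v / 2 := by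
  have hamgm : r ≤ r ^ 2 / (2 * v) + v / 2 := by
    have : r ^ 2 / (2 * v) + v / 2 - r = (r - v) ^ 2 / (2 * v) := by
      field_simp
      ring
    linarith [show 0 ≤ (r - v) ^ 2 / (2 * v) by positivity]
  rw [neg_div, Real.exp_neg, inv_mul_le_iff₀ (Real.exp_pos _)]
  have hexp := Real.add_one_le_exp (r ^ 2 / (2 * v))
  have hone : 1 ≤ Real.exp (r ^ 2 / (2 * v)) := Real.one_le_exp (by positivity)
  nlinarith

section Integrability

variable [MeasurableSpace E] [BorelSpace E] {P : Measure E} [IsFiniteMeasure P]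

lemma integrable_exp_neg_sq_norm_sub_div {v : ℝ} (hv : 0 ≤ v) (x : E) :
    Integrable (fun y ↦ Real.exp (-‖x - y‖ ^ 2 / (2 * v))) P := by
  refine .of_bound (Measurable.aestronglyMeasurable (by fun_prop)) 1 (.of_forall fun y ↦ ?_)
  rw [Real.norm_of_nonneg (Real.exp_pos _).le, Real.exp_le_one_iff, neg_div]
  exact neg_nonpos.2 (by positivity)

/-- The conditional law of `Y` given `Y + √v • Z = x`, where `Y ∼ P` and `Z` is an independent
standard Gaussian. It is `tiltMeasure d P 1 σ x` for `E = Vec d` and `v = σ ^ 2`, encoded through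
`Measure.tilted`. -/
def gaussPosterior (P : Measure E) (v : ℝ) (x : E) : Measure E :=
  P.tilted fun y ↦ -‖x - y‖ ^ 2 / (2 * v)

lemma isProbabilityMeasure_gaussPosterior [NeZero P] {v : ℝ} (hv : 0 ≤ v) (x : E) :
    IsProbabilityMeasure (gaussPosterior P v x) :=
  isProbabilityMeasure_tilted (integrable_exp_neg_sq_norm_sub_div hv x)

end Integrability

variable [InnerProductSpace ℝ E] [CompleteSpace E]

lemma hasGradientAt_integral_of_dominated {α : Type*} [MeasurableSpace α] {μ : Measure α}
    {F : E → α → ℝ} {G : E → α → E} {bound : α → ℝ} {x₀ : E}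
    (hF_meas : ∀ x, AEStronglyMeasurable (F x) μ) (hF_int : Integrable (F x₀) μ)
    (hG_meas : AEStronglyMeasurable (G x₀) μ) (hG_le : ∀ x ω, ‖G x ω‖ ≤ bound ω)
    (hbound : Integrable bound μ) (hFG : ∀ x ω, HasGradientAt (F · ω) (G x ω) x) :
    HasGradientAt (fun x ↦ ∫ ω, F x ω ∂μ) (∫ ω, G x₀ ω ∂μ) x₀ := by
  have hG_int : Integrable (G x₀) μ := hbound.mono' hG_meas (.of_forall (hG_le x₀))
  have hdual_meas : AEStronglyMeasurable (fun ω ↦ InnerProductSpace.toDual ℝ E (G x₀ ω)) μ :=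
    (InnerProductSpace.toDual ℝ E).continuous.comp_aestronglyMeasurable hG_meas
  have hdual_le : ∀ x ω, ‖InnerProductSpace.toDual ℝ E (G x ω)‖ ≤ bound ω := fun x ω ↦ by
    simpa using hG_le x ω
  have hdual_int : Integrable (fun ω ↦ InnerProductSpace.toDual ℝ E (G x₀ ω)) μ :=
    hbound.mono' hdual_meas (.of_forall (hdual_le x₀))
  rw [hasGradientAt_iff_hasFDerivAt]
  refine (hasFDerivAt_integral_of_dominated_of_fderiv_le Filter.univ_mem (.of_forall hF_meas)
    hF_int hdual_meas (.of_forall fun ω x _ ↦ hdual_le x ω) hbound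
    (.of_forall fun ω x _ ↦ (hFG x ω).hasFDerivAt)).congr_fderiv ?_
  ext w
  rw [ContinuousLinearMap.integral_apply hdual_int]
  simp only [InnerProductSpace.toDual_apply_apply, real_inner_comm w]
  exact integral_inner hG_int w

lemma hasGradientAt_exp_neg_sq_norm_sub_div (v : ℝ) (x y : E) :
    HasGradientAt (fun x ↦ Real.exp (-‖x - y‖ ^ 2 / (2 * v)))
      ((Real.exp (-‖x - y‖ ^ 2 / (2 * v)) * v⁻¹) • (y - x)) x := by
  have hsq : HasFDerivAt (fun x : E ↦ -‖x - y‖ ^ 2 / (2 * v)) _ x :=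
    ((((hasFDerivAt_id x).sub_const y).norm_sq.neg).mul_const (2 * v)⁻¹)
  rw [hasGradientAt_iff_hasFDerivAt]
  refine hsq.exp.congr_fderiv ?_
  ext w
  simp only [mul_inv_rev, id_eq, map_sub, ContinuousLinearMap.comp_id, smul_neg,
    neg_apply, smul_apply, sub_apply, coe_innerSL_apply, nsmul_eq_mul, Nat.cast_ofNat, smul_eq_mul,
    map_smul, InnerProductSpace.toDual_apply_apply]
  ring

variable [MeasurableSpace E] [BorelSpace E] [SecondCountableTopology E]
  {P : Measure E} [IsFiniteMeasure P] {v : ℝ}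

lemma hasGradientAt_integral_exp_neg_sq_norm_sub_div (hv : 0 < v) (x : E) :
    HasGradientAt (fun x ↦ ∫ y, Real.exp (-‖x - y‖ ^ 2 / (2 * v)) ∂P)
      (∫ y, (Real.exp (-‖x - y‖ ^ 2 / (2 * v)) * v⁻¹) • (y - x) ∂P) x := by
  refine hasGradientAt_integral_of_dominated (bound := fun _ ↦ v⁻¹ * (1 + v / 2))
    (fun x ↦ (integrable_exp_neg_sq_norm_sub_div hv.le x).1)
    (integrable_exp_neg_sq_norm_sub_div hv.le x)
    (Continuous.aestronglyMeasurable (by fun_prop)) (fun x y ↦ ?_) (integrable_const _)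
    (hasGradientAt_exp_neg_sq_norm_sub_div v)
  rw [norm_smul, Real.norm_of_nonneg (by positivity), mul_right_comm, mul_comm, norm_sub_rev y x]
  gcongr
  exact exp_neg_sq_div_mul_le hv _

lemma hasGradientAt_log_integral_exp_neg_sq_norm_sub_div [NeZero P] (hv : 0 < v) (x : E) :
    HasGradientAt (fun x ↦ Real.log (∫ y, Real.exp (-‖x - y‖ ^ 2 / (2 * v)) ∂P))
      (v⁻¹ • ∫ y, (y - x) ∂gaussPosterior P v x) x := by
  have hZ : 0 < ∫ y, Real.exp (-‖x - y‖ ^ 2 / (2 * v)) ∂P :=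
    integral_exp_pos (integrable_exp_neg_sq_norm_sub_div hv.le x)
  have hgrad : v⁻¹ • ∫ y, (y - x) ∂gaussPosterior P v x =
      (∫ y, Real.exp (-‖x - y‖ ^ 2 / (2 * v)) ∂P)⁻¹ •
        ∫ y, (Real.exp (-‖x - y‖ ^ 2 / (2 * v)) * v⁻¹) • (y - x) ∂P := by
    rw [gaussPosterior, integral_tilted, ← integral_smul, ← integral_smul]
    refine integral_congr_ae (.of_forall fun y ↦ ?_)
    simp only [smul_smul]
    congr 1
    ring
  rw [hgrad, hasGradientAt_iff_hasFDerivAt, map_smul]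
  exact (hasGradientAt_integral_exp_neg_sq_norm_sub_div hv x).hasFDerivAt.log hZ.ne'

end Score

section Gaussian

open Module

section Haar

variable {E : Type*} [NormedAddCommGroup E] [MeasurableSpace E] [BorelSpace E]

lemma lintegral_exp_neg_mul_sq_norm [InnerProductSpace ℝ E] [FiniteDimensional ℝ E] {b : ℝ}
    (hb : 0 < b) :
    ∫⁻ x : E, ENNReal.ofReal (Real.exp (-b * ‖x‖ ^ 2)) =
      ENNReal.ofReal ((π / b) ^ (finrank ℝ E / 2 : ℝ)) := by
  have hval := GaussianFourier.integral_rexp_neg_mul_sq_norm (V := E) hb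
  have hint : Integrable fun x : E ↦ Real.exp (-b * ‖x‖ ^ 2) :=
    .of_integral_ne_zero (by rw [hval]; positivity)
  rw [← ofReal_integral_eq_lintegral_ofReal hint (.of_forall fun x ↦ (Real.exp_pos _).le), hval]

lemma lintegral_comp_add_smul [NormedSpace ℝ E] [FiniteDimensional ℝ E] (μ : Measure E)
    [μ.IsAddHaarMeasure] {c : ℝ} (hc : c ≠ 0) (a : E) {h : E → ENNReal} (hh : Measurable h) :
    ∫⁻ z, h (a + c • z) ∂μ = ENNReal.ofReal |(c ^ finrank ℝ E)⁻¹| * ∫⁻ x, h x ∂μ := by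
  calc ∫⁻ z, h (a + c • z) ∂μ = ∫⁻ x, h (a + x) ∂μ.map (c • ·) := by
        rw [lintegral_map (by fun_prop) (by fun_prop)]
    _ = ENNReal.ofReal |(c ^ finrank ℝ E)⁻¹| * ∫⁻ x, h x ∂μ := by
      rw [Measure.map_addHaar_smul _ hc, lintegral_smul_measure, lintegral_add_left_eq_self,
        smul_eq_mul]

end Haar

variable {d : ℕ} {v : ℝ}

lemma measurable_gaussDensity (m : Vec d) : Measurable (gaussDensity d m v) := by
  unfold gaussDensity
  fun_prop

lemma lintegral_gaussMeasure (hv : 0 ≤ v) (m : Vec d) (h : Vec d → ENNReal) :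
    ∫⁻ x, h x ∂gaussMeasure d m v =
      ∫⁻ x, ENNReal.ofReal (Real.exp (-‖x - m‖ ^ 2 / (2 * v))) * h x
        ∂(ENNReal.ofReal ((2 * π * v) ^ (-(d : ℝ) / 2)) • volume) := by
  rw [gaussMeasure, lintegral_withDensity_eq_lintegral_mul_non_measurable _
    (measurable_gaussDensity m).ennreal_ofReal (.of_forall fun _ ↦ ENNReal.ofReal_lt_top),
    lintegral_smul_measure, smul_eq_mul, ← lintegral_const_mul' _ _ ENNReal.ofReal_ne_top]
  refine lintegral_congr fun x ↦ ?_
  rw [Pi.mul_apply, gaussDensity, ENNReal.ofReal_mul (by positivity), mul_assoc]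

lemma lintegral_exp_mul_sq_norm_gaussMeasure (hv : 0 < v) (m : Vec d) {a : ℝ}
    (ha : 2 * a * v < 1) :
    ∫⁻ x, ENNReal.ofReal (Real.exp (a * ‖x - m‖ ^ 2)) ∂gaussMeasure d m v =
      ENNReal.ofReal ((1 - 2 * a * v) ^ (-(d : ℝ) / 2)) := by
  set b := (1 - 2 * a * v) / (2 * v) with hb_def
  have hgap : 0 < 1 - 2 * a * v := by linarith
  have hb : 0 < b := by positivity
  have hexp (x : Vec d) : ENNReal.ofReal (Real.exp (-‖x - m‖ ^ 2 / (2 * v))) *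
      ENNReal.ofReal (Real.exp (a * ‖x - m‖ ^ 2)) =
      ENNReal.ofReal (Real.exp (-b * ‖x - m‖ ^ 2)) := by
    rw [← ENNReal.ofReal_mul (Real.exp_pos _).le, ← Real.exp_add, hb_def]
    congr 2
    field_simp
    ring
  have hconst : (2 * π * v) ^ (-(d : ℝ) / 2) * (π / b) ^ ((d : ℝ) / 2) =
      (1 - 2 * a * v) ^ (-(d : ℝ) / 2) := by
    rw [show π / b = (2 * π * v) / (1 - 2 * a * v) by rw [hb_def]; field_simp,
      Real.div_rpow (by positivity) hgap.le, neg_div, Real.rpow_neg (by positivity),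
      Real.rpow_neg hgap.le, inv_mul_eq_div, div_div_cancel_left' (by positivity)]
  rw [lintegral_gaussMeasure hv.le]
  simp only [hexp]
  rw [lintegral_smul_measure, smul_eq_mul,
    lintegral_sub_right_eq_self (fun x ↦ ENNReal.ofReal (Real.exp (-b * ‖x‖ ^ 2))),
    lintegral_exp_neg_mul_sq_norm hb, finrank_euclideanSpace_fin,
    ← ENNReal.ofReal_mul (by positivity), hconst]

lemma isProbabilityMeasure_gaussMeasure (hv : 0 < v) (m : Vec d) :
    IsProbabilityMeasure (gaussMeasure d m v) :=
  ⟨by simpa using lintegral_exp_mul_sq_norm_gaussMeasure hv m (a := 0) (by simp)⟩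

lemma gaussDensity_add_smul (hv : 0 ≤ v) {c : ℝ} (hc : c ≠ 0) (a m z : Vec d) :
    gaussDensity d (a + c • m) (c ^ 2 * v) (a + c • z) =
      |(c ^ d)⁻¹| * gaussDensity d m v z := by
  have hpow : (c ^ 2) ^ (-(d : ℝ) / 2) = |(c ^ d)⁻¹| := by
    rw [← sq_abs, ← Real.rpow_natCast_mul (abs_nonneg c), abs_inv, abs_pow,
      ← Real.rpow_natCast, ← Real.rpow_neg (abs_nonneg c)]
    congr 1
    push_cast
    ring
  have hexp : -‖a + c • z - (a + c • m)‖ ^ 2 / (2 * (c ^ 2 * v)) = -‖z - m‖ ^ 2 / (2 * v) := by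
    rw [add_sub_add_left_eq_sub, ← smul_sub, norm_smul, mul_pow, Real.norm_eq_abs, sq_abs,
      mul_left_comm, ← mul_neg, mul_div_mul_left _ _ (by positivity)]
  rw [gaussDensity, gaussDensity, hexp, mul_left_comm, Real.mul_rpow (sq_nonneg c) (by positivity),
    hpow, mul_assoc]

lemma lintegral_comp_add_smul_gaussMeasure (hv : 0 ≤ v) {c : ℝ} (hc : c ≠ 0) (a m : Vec d)
    {h : Vec d → ENNReal} (hh : Measurable h) :
    ∫⁻ z, h (a + c • z) ∂gaussMeasure d m v =
      ∫⁻ x, h x ∂gaussMeasure d (a + c • m) (c ^ 2 * v) := by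
  have hdens (m : Vec d) (v : ℝ) : Measurable fun x ↦ ENNReal.ofReal (gaussDensity d m v x) :=
    (measurable_gaussDensity m).ennreal_ofReal
  have hjac : ENNReal.ofReal |(c ^ d)⁻¹| ≠ 0 := by
    rw [ne_eq, ENNReal.ofReal_eq_zero, not_le]
    positivity
  have hchange := lintegral_comp_add_smul volume hc a ((hdens (a + c • m) (c ^ 2 * v)).mul hh)
  simp only [Pi.mul_apply, gaussDensity_add_smul hv hc, ENNReal.ofReal_mul (abs_nonneg _),
    mul_assoc, finrank_euclideanSpace_fin] at hchange
  rw [lintegral_const_mul' _ _ ENNReal.ofReal_ne_top,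
    ENNReal.mul_right_inj hjac ENNReal.ofReal_ne_top] at hchange
  rw [gaussMeasure, gaussMeasure, lintegral_withDensity_eq_lintegral_mul _ (hdens _ _) hh,
    lintegral_withDensity_eq_lintegral_mul _ (hdens _ _) (by fun_prop)]
  exact hchange

end Gaussian

lemma one_sub_inv_rpow_neg_half_le_two {n : ℝ} (hn : 1 ≤ n) :
    (1 - (2 * n)⁻¹) ^ (-n / 2) ≤ 2 := by
  have hinv : (2 * n)⁻¹ ≤ 1 / 2 := by
    rw [← one_div]
    gcongr
    linarith
  have hbase : 0 < 1 - (2 * n)⁻¹ := by linarith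
  have hbernoulli : 1 / 2 ≤ (1 - (2 * n)⁻¹) ^ n := by
    have := one_add_mul_self_le_rpow_one_add (s := -(2 * n)⁻¹) (by linarith) hn
    rw [← sub_eq_add_neg] at this
    refine le_trans (le_of_eq ?_) this
    field_simp
    ring
  have hle_half : (1 - (2 * n)⁻¹) ^ n ≤ (1 - (2 * n)⁻¹) ^ (n / 2) :=
    Real.rpow_le_rpow_of_exponent_ge hbase (by linarith [show 0 ≤ (2 * n)⁻¹ by positivity])
      (by linarith)
  rw [neg_div, Real.rpow_neg hbase.le]
  exact inv_le_of_inv_le₀ two_pos (by linarith)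

section Perturbation

variable {d : ℕ} {P : Measure (Vec d)} {σ : ℝ}

lemma perturbLaw_eq_map_stdGauss :
    perturbLaw d P σ = (P.prod (stdGauss d)).map fun q ↦ q.1 + σ • q.2 := by
  simp [perturbLaw, stdGauss, gaussMeasure, gaussDensity]

lemma isProbabilityMeasure_perturbLaw [IsProbabilityMeasure P] :
    IsProbabilityMeasure (perturbLaw d P σ) := by
  have : IsProbabilityMeasure (stdGauss d) := isProbabilityMeasure_gaussMeasure one_pos 0
  rw [perturbLaw_eq_map_stdGauss]
  exact Measure.isProbabilityMeasure_map (by fun_prop)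

lemma lintegral_perturbLaw (hσ : σ ≠ 0) {h : Vec d → ENNReal} (hh : Measurable h) :
    ∫⁻ x, h x ∂perturbLaw d P σ = ∫⁻ y, ∫⁻ x, h x ∂gaussMeasure d y (σ ^ 2) ∂P := by
  have : IsProbabilityMeasure (stdGauss d) := isProbabilityMeasure_gaussMeasure one_pos 0
  rw [perturbLaw_eq_map_stdGauss, lintegral_map hh (by fun_prop),
    lintegral_prod _ (by fun_prop)]
  refine lintegral_congr fun y ↦ ?_
  rw [stdGauss, lintegral_comp_add_smul_gaussMeasure zero_le_one hσ y 0 hh, smul_zero, add_zero,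
    mul_one]

lemma lintegral_perturbLaw_lintegral_gaussPosterior [IsFiniteMeasure P] (hσ : σ ≠ 0)
    {V : Vec d → Vec d → ENNReal} (hV : Measurable (Function.uncurry V)) :
    ∫⁻ x, ∫⁻ y, V x y ∂gaussPosterior P (σ ^ 2) x ∂perturbLaw d P σ =
      ∫⁻ y, ∫⁻ x, V x y ∂gaussMeasure d y (σ ^ 2) ∂P := by
  have hf : Measurable (Function.uncurry fun x y : Vec d ↦ -‖x - y‖ ^ 2 / (2 * σ ^ 2)) := by
    unfold Function.uncurry
    fun_prop
  simp only [gaussPosterior]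
  rw [lintegral_perturbLaw hσ (measurable_lintegral_tilted hf hV)]
  simp only [lintegral_gaussMeasure (sq_nonneg σ)]
  exact lintegral_lintegral_exp_mul_lintegral_tilted hf
    (integrable_exp_neg_sq_norm_sub_div (sq_nonneg σ)) hV

lemma scoreOf_perturbDensity [IsFiniteMeasure P] [NeZero P] (hσ : σ ≠ 0) (x : Vec d) :
    scoreOf (perturbDensity d P σ) x =
      (σ ^ 2)⁻¹ • ∫ y, (y - x) ∂gaussPosterior P (σ ^ 2) x := by
  have hlog (z : Vec d) : Real.log (perturbDensity d P σ z) =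
      Real.log ((2 * π * σ ^ 2) ^ (-(d : ℝ) / 2)) +
        Real.log (∫ y, Real.exp (-‖z - y‖ ^ 2 / (2 * σ ^ 2)) ∂P) :=
    Real.log_mul (by positivity)
      (integral_exp_pos (integrable_exp_neg_sq_norm_sub_div (sq_nonneg σ) z)).ne'
  simp only [scoreOf, hlog]
  exact (hasGradientAt_log_integral_exp_neg_sq_norm_sub_div (by positivity)
    x).hasFDerivAt.const_add _ |>.hasGradientAt.gradient.trans (by simp)

lemma lintegral_exp_mul_sq_norm_scoreOf_le [IsProbabilityMeasure P] (hσ : σ ≠ 0) {a : ℝ}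
    (ha : 0 ≤ a) (haσ : 2 * a / σ ^ 2 < 1) :
    ∫⁻ x, ENNReal.ofReal (Real.exp (a * ‖scoreOf (perturbDensity d P σ) x‖ ^ 2))
        ∂perturbLaw d P σ ≤
      ENNReal.ofReal ((1 - 2 * a / σ ^ 2) ^ (-(d : ℝ) / 2)) := by
  set κ := a / (σ ^ 2) ^ 2 with hκ
  have hκσ : 2 * κ * σ ^ 2 = 2 * a / σ ^ 2 := by
    rw [hκ, pow_two (σ ^ 2)]
    field_simp
  have hV : Measurable
      (Function.uncurry fun x y : Vec d ↦ ENNReal.ofReal (Real.exp (κ * ‖x - y‖ ^ 2))) := by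
    unfold Function.uncurry
    fun_prop
  calc ∫⁻ x, ENNReal.ofReal (Real.exp (a * ‖scoreOf (perturbDensity d P σ) x‖ ^ 2))
        ∂perturbLaw d P σ
      ≤ ∫⁻ x, ∫⁻ y, ENNReal.ofReal (Real.exp (κ * ‖x - y‖ ^ 2))
          ∂gaussPosterior P (σ ^ 2) x ∂perturbLaw d P σ := by
        gcongr with x
        have := isProbabilityMeasure_gaussPosterior (P := P) (sq_nonneg σ) x
        have hscore : a * ‖scoreOf (perturbDensity d P σ) x‖ ^ 2 =
            κ * ‖∫ y, (y - x) ∂gaussPosterior P (σ ^ 2) x‖ ^ 2 := by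
          rw [scoreOf_perturbDensity hσ, norm_smul, mul_pow, norm_inv, inv_pow, Real.norm_eq_abs,
            sq_abs, ← mul_assoc, hκ, div_eq_mul_inv]
        simp only [hscore, norm_sub_rev x]
        exact ofReal_exp_mul_sq_norm_integral_le (by positivity) _
    _ = ∫⁻ y, ∫⁻ x, ENNReal.ofReal (Real.exp (κ * ‖x - y‖ ^ 2)) ∂gaussMeasure d y (σ ^ 2) ∂P :=
        lintegral_perturbLaw_lintegral_gaussPosterior hσ hV
    _ = ENNReal.ofReal ((1 - 2 * a / σ ^ 2) ^ (-(d : ℝ) / 2)) := by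
        simp_rw [lintegral_exp_mul_sq_norm_gaussMeasure (sq_pos_of_ne_zero hσ) _ (hκσ ▸ haσ), hκσ]
        simp

lemma lintegral_exp_sq_norm_scoreOf_div_le_two [IsProbabilityMeasure P] (hσ : σ ≠ 0)
    (hd : 0 < d) :
    ∫⁻ x, ENNReal.ofReal (Real.exp (‖scoreOf (perturbDensity d P σ) x‖ ^ 2 /
        (2 * √(d / σ ^ 2)) ^ 2)) ∂perturbLaw d P σ ≤ 2 := by
  have hd_one : (1 : ℝ) ≤ d := by exact_mod_cast hd
  have hscale : 2 * (σ ^ 2 / (4 * d)) / σ ^ 2 = (2 * (d : ℝ))⁻¹ := by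
    field_simp
    ring
  have hinv : (2 * (d : ℝ))⁻¹ < 1 := inv_lt_one_of_one_lt₀ (by linarith)
  calc ∫⁻ x, ENNReal.ofReal (Real.exp (‖scoreOf (perturbDensity d P σ) x‖ ^ 2 /
        (2 * √(d / σ ^ 2)) ^ 2)) ∂perturbLaw d P σ
      = ∫⁻ x, ENNReal.ofReal (Real.exp (σ ^ 2 / (4 * d) *
          ‖scoreOf (perturbDensity d P σ) x‖ ^ 2)) ∂perturbLaw d P σ := by
        rw [mul_pow, Real.sq_sqrt (by positivity)]
        congr! 4
        field_simp
        norm_num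
    _ ≤ ENNReal.ofReal ((1 - (2 * (d : ℝ))⁻¹) ^ (-(d : ℝ) / 2)) :=
        hscale ▸ lintegral_exp_mul_sq_norm_scoreOf_le hσ (by positivity) (hscale ▸ hinv)
    _ ≤ 2 := ENNReal.ofReal_le_of_le_toReal (one_sub_inv_rpow_neg_half_le_two hd_one)

end Perturbation

/-- Lemma `score-sub`: sub-Gaussian bound on the norm of the score of a
Gaussian perturbation. -/
theorem statement19 :
    ∃ C : ℝ, 0 < C ∧
      ∀ (d : ℕ) (σ : ℝ) (P : Measure (Vec d)),
        IsProbabilityMeasure P → 0 < σ →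
        (∀ p : ℕ, 1 ≤ p →
          (∫ x, ‖scoreOf (perturbDensity d P σ) x‖ ^ p ∂(perturbLaw d P σ)) ≤
            (C * p * d / σ ^ 2) ^ ((p : ℝ) / 2)) ∧
        psi2Norm (perturbLaw d P σ) (fun x => ‖scoreOf (perturbDensity d P σ) x‖) ≤
          C * Real.sqrt (d / σ ^ 2) := by
  refine ⟨8, by norm_num, fun d σ P _ hσ ↦ ?_⟩
  rcases d.eq_zero_or_pos with rfl | hd
  · have hscore (x : Vec 0) : scoreOf (perturbDensity 0 P σ) x = 0 := Subsingleton.elim _ _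
    have := isProbabilityMeasure_perturbLaw (P := P) (σ := σ)
    simp only [hscore, norm_zero, psi2Norm_zero]
    refine ⟨fun p hp ↦ ?_, by positivity⟩
    rw [zero_pow (by lia), integral_zero]
    positivity
  · have hexp := lintegral_exp_sq_norm_scoreOf_div_le_two (P := P) hσ.ne' hd
    refine ⟨fun p hp ↦ ?_, (psi2Norm_le_of_lintegral_exp_le_two (by positivity) hexp).trans ?_⟩
    · have hmoment := integral_abs_rpow_le_of_lintegral_exp_le_two
        (Nat.one_le_cast.2 hp) (by positivity) hexp
      simp only [abs_norm, Real.rpow_natCast] at hmoment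
      convert hmoment using 2
      rw [mul_pow, Real.sq_sqrt (by positivity)]
      ring
    · gcongr
      norm_num

end DiffusionKL
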